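/- Let f_1,…,f_n be MRF (submodular dichotomous) valuations on a finite item set M and let σ be a priority order. Then: (i) a σ-Lorenz dominating allocation exists; (ii) any two σ-Lorenz dominating allocations A, A' give every agent the same utility, i.e., f_i(A_i) = f_i(A'_i) for all i (the utility vector of σ-Lorenz dominating allocations is unique); and (iii) every σ-Lorenz dominating allocation is Lorenz dominating with respect to the unperturbed valuations f_1,…,f_n. -/

import Mathlib

open Finset
open scoped Classical

variable {n : ℕ} {I : Type*} [DecidableEq I] [Fintype I]

/-- An allocation assigns pairwise disjoint bundles of items to the agents
(items may remain unallocated). -/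
def IsAllocation (A : Fin n → Finset I) : Prop :=
  ∀ i j : Fin n, i ≠ j → Disjoint (A i) (A j)

/-- The vector of utilities of an allocation under a profile of valuations. -/
def util {α : Type*} (f : Fin n → Finset I → α) (A : Fin n → Finset I) : Fin n → α :=
  fun i => f i (A i)

/-- The entries of the vector `u`, sorted in nondecreasing order. -/
noncomputable def sortedVec {α : Type*} [LinearOrder α] (u : Fin n → α) : List α :=
  (Finset.univ.val.map u).sort (· ≤ ·)

/-- `u` Lorenz-dominates `v`: for each `k`, the sum of the `k` smallest entries of `u`
is at least the sum of the `k` smallest entries of `v`. -/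
def LorenzGE {α : Type*} [LinearOrder α] [AddCommMonoid α] (u v : Fin n → α) : Prop :=
  ∀ k : ℕ, ((sortedVec v).take k).sum ≤ ((sortedVec u).take k).sum

/-- A matroid rank function: a normalized submodular valuation with dichotomous marginals. -/
structure IsMRF (f : Finset I → ℕ) : Prop where
  empty : f ∅ = 0
  submod : ∀ S T : Finset I, S ⊆ T → ∀ a : I,
      f (insert a T) + f S ≤ f (insert a S) + f T
  dichot : ∀ (S : Finset I) (a : I), f (insert a S) = f S ∨ f (insert a S) = f S + 1

/-- Non-redundancy: removing any item from any agent's bundle strictly decreases its value. -/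
def NonRedundant (f : Fin n → Finset I → ℕ) (A : Fin n → Finset I) : Prop :=
  ∀ i : Fin n, ∀ a ∈ A i, f i ((A i).erase a) < f i (A i)

/-- A Lorenz dominating allocation. -/
def LorenzDominating (f : Fin n → Finset I → ℕ) (A : Fin n → Finset I) : Prop :=
  ∀ B : Fin n → Finset I, IsAllocation B → LorenzGE (util f A) (util f B)

/-- The σ-perturbed utilities: agent `i` gets `f i (A i) + σ(i)/n²`, where the priority
`σ(i)` ranges over `{1,…,n}`. -/
noncomputable def pUtil (σ : Equiv.Perm (Fin n)) (f : Fin n → Finset I → ℕ)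
    (A : Fin n → Finset I) : Fin n → ℝ :=
  fun i => (f i (A i) : ℝ) + (((σ i : ℕ) : ℝ) + 1) / (n : ℝ) ^ 2

/-- A σ-Lorenz dominating allocation. -/
def SigmaLorenzDom (σ : Equiv.Perm (Fin n)) (f : Fin n → Finset I → ℕ)
    (A : Fin n → Finset I) : Prop :=
  ∀ B : Fin n → Finset I, IsAllocation B → LorenzGE (pUtil σ f A) (pUtil σ f B)

/-- Restriction of a valuation to a subset `D` of the items. -/
def restrictVal (f : Finset I → ℕ) (D : Finset I) : Finset I → ℕ := fun S => f (S ∩ D)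

/-- A partition of all the items into `n` (possibly empty) bundles. -/
def IsPartition (P : Fin n → Finset I) : Prop :=
  (∀ i j : Fin n, i ≠ j → Disjoint (P i) (P j)) ∧ ∀ a : I, ∃ j, a ∈ P j

/-- An XOS valuation: the pointwise maximum of a finite nonempty family of
nonnegative additive valuations. -/
def IsXOS (f : Finset I → ℝ) : Prop :=
  ∃ (k : ℕ) (w : Fin (k + 1) → I → ℝ),
    (∀ t a, 0 ≤ w t a) ∧
    ∀ S : Finset I, f S = Finset.univ.sup' Finset.univ_nonempty (fun t => ∑ a ∈ S, w t a)

/-- A dichotomous valuation (real-valued version). -/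
def IsDichotomousR (f : Finset I → ℝ) : Prop :=
  ∀ (S : Finset I) (a : I), f (insert a S) = f S ∨ f (insert a S) = f S + 1

/-- Envy-freeness up to one good. -/
def EF1 (f : Fin n → Finset I → ℝ) (A : Fin n → Finset I) : Prop :=
  ∀ i j : Fin n, f i (A j) ≤ f i (A i) ∨ ∃ e ∈ A j, f i ((A j).erase e) ≤ f i (A i)

/-- The maximum welfare attainable by a set `S` of agents. -/
noncomputable def maxWelfare (f : Fin n → Finset I → ℕ) (S : Finset (Fin n)) : ℕ :=
  Finset.sup (Finset.univ.filter fun B : Fin n → Finset I => IsAllocation B)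
    (fun B => ∑ j ∈ S, f j (B j))

/-- An allocation extended with index `none` for the set of unallocated items. -/
def extAlloc (A : Fin n → Finset I) : Option (Fin n) → Finset I
  | none => Finset.univ \ Finset.univ.biUnion A
  | some i => A i

section SortedVec

variable {α : Type*} [LinearOrder α]

theorem coe_sortedVec {n : ℕ} (u : Fin n → α) :
    (sortedVec u : Multiset α) = Finset.univ.val.map u :=
  Multiset.sort_eq _ _

theorem length_sortedVec {n : ℕ} (u : Fin n → α) : (sortedVec u).length = n := by
  simp [sortedVec]

theorem pairwise_sortedVec {n : ℕ} (u : Fin n → α) : (sortedVec u).Pairwise (· ≤ ·) :=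
  Multiset.pairwise_sort _ _

theorem exists_sum_eq_sum_take_sortedVec [AddCommMonoid α] {n : ℕ} (u : Fin n → α) (k : ℕ) :
    ∃ S : Finset (Fin n), S.card = min k n ∧ ((sortedVec u).take k).sum = ∑ i ∈ S, u i := by
  obtain ⟨l, hl, hlu⟩ : ∃ l : List (Fin n), (l : Multiset (Fin n)) = Finset.univ.val ∧
      l.map u = sortedVec u := by
    have hl : (((List.finRange n).map (Tuple.sort u) : List (Fin n)) : Multiset (Fin n)) =
        Finset.univ.val := by
      rw [← Multiset.map_coe, ← Finset.val_univ_fin]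
      exact Multiset.map_univ_val_equiv _
    refine ⟨_, hl, List.Perm.eq_of_pairwise' ?_ (pairwise_sortedVec u) ?_⟩
    · rw [List.map_map, List.pairwise_map]
      exact (List.pairwise_le_finRange n).imp fun h => Tuple.monotone_sort u h
    · rw [← Multiset.coe_eq_coe, coe_sortedVec, ← hl, Multiset.map_coe]
  have hnd : l.Nodup := by
    rw [← Multiset.coe_nodup, hl]; exact Finset.univ.nodup
  have hlen : l.length = n := by
    rw [← Multiset.coe_card, hl]; simp
  refine ⟨(l.take k).toFinset, ?_, ?_⟩
  · rw [List.toFinset_card_of_nodup (hnd.sublist (List.take_sublist _ _))]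
    simp [hlen]
  · rw [List.sum_toFinset _ (hnd.sublist (List.take_sublist _ _)), ← hlu, List.map_take]

variable [AddCommMonoid α] [IsOrderedAddMonoid α]

theorem List.Pairwise.sum_take_cons_le {a : α} {l : List α}
    (h : (a :: l).Pairwise (· ≤ ·)) {m : ℕ} (hm : m ≤ l.length) :
    ((a :: l).take m).sum ≤ (l.take m).sum := by
  induction l generalizing a m with
  | nil => simp_all
  | cons b l ih =>
    cases m with
    | zero => simp
    | succ m =>
      rw [List.pairwise_cons] at h
      simp only [List.take_succ_cons, List.sum_cons]
      have h1 := ih h.2 (m := m) (by simpa using hm)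
      have h2 := h.1 b (by simp)
      simpa using add_le_add h2 h1

theorem List.Sublist.sum_take_length_le {s l : List α} (hs : s.Sublist l)
    (hl : l.Pairwise (· ≤ ·)) : (l.take s.length).sum ≤ s.sum := by
  induction hs with
  | slnil => simp
  | cons a hs ih =>
    exact (hl.sum_take_cons_le hs.length_le).trans (ih (List.pairwise_cons.1 hl).2)
  | cons_cons a hs ih =>
    simpa using add_le_add_right (ih (List.pairwise_cons.1 hl).2) a

theorem sum_take_sortedVec_le {n : ℕ} (u : Fin n → α) {k : ℕ} {S : Finset (Fin n)}
    (hS : S.card = min k n) : ((sortedVec u).take k).sum ≤ ∑ i ∈ S, u i := by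
  have hsub : ((S.val.map u).sort (· ≤ ·)).Sublist (sortedVec u) := by
    refine List.sublist_of_subperm_of_pairwise ?_ (Multiset.pairwise_sort _ _)
      (pairwise_sortedVec u)
    rw [← Multiset.coe_le, coe_sortedVec, Multiset.sort_eq]
    exact Multiset.map_le_map (Finset.val_le_iff.2 (Finset.subset_univ S))
  have h := hsub.sum_take_length_le (pairwise_sortedVec u)
  have hk : (sortedVec u).take k = (sortedVec u).take (min k n) := by
    rw [← List.take_take, List.take_of_length_le (length_sortedVec u).le]
  rw [hk]
  rw [← Multiset.sum_coe, ← Multiset.sum_coe, Multiset.sort_eq, Multiset.length_sort,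
    Multiset.card_map, Finset.card_val, hS, Multiset.sum_coe] at h
  exact h

theorem LorenzGE.of_forall_exists {n : ℕ} {u v : Fin n → α}
    (h : ∀ S : Finset (Fin n), ∃ T : Finset (Fin n),
      T.card = S.card ∧ ∑ i ∈ T, v i ≤ ∑ i ∈ S, u i) : LorenzGE u v := by
  intro k
  obtain ⟨S, hS, hSu⟩ := exists_sum_eq_sum_take_sortedVec u k
  obtain ⟨T, hT, hTS⟩ := h S
  rw [hSu]
  exact (sum_take_sortedVec_le v (hT.trans hS)).trans hTS

end SortedVec

theorem LorenzGE.rfl {α : Type*} [LinearOrder α] [AddCommMonoid α] {n : ℕ} {u : Fin n → α} :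
    LorenzGE u u :=
  fun _ => le_rfl

theorem LorenzGE.trans {α : Type*} [LinearOrder α] [AddCommMonoid α] {n : ℕ}
    {u v w : Fin n → α} (h₁ : LorenzGE u v) (h₂ : LorenzGE v w) : LorenzGE u w :=
  fun k => (h₂ k).trans (h₁ k)

theorem LorenzGE.map_eq_of_antisymm {n : ℕ} {u v : Fin n → ℝ} (h₁ : LorenzGE u v)
    (h₂ : LorenzGE v u) :
    (Finset.univ.val.map u : Multiset ℝ) = Finset.univ.val.map v := by
  have hsum : ∀ k, ((sortedVec u).take k).sum = ((sortedVec v).take k).sum :=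
    fun k => le_antisymm (h₂ k) (h₁ k)
  rw [← coe_sortedVec, ← coe_sortedVec]
  congr 1
  refine List.ext_getElem (by simp only [length_sortedVec]) fun k hk hk' => ?_
  have h := hsum (k + 1)
  rw [List.sum_take_succ _ _ hk, List.sum_take_succ _ _ hk', hsum k] at h
  exact add_left_cancel h

namespace IsMRF

variable {I : Type*} [DecidableEq I] {f : Finset I → ℕ}

theorem le_insert (hf : IsMRF f) (S : Finset I) (a : I) : f S ≤ f (insert a S) := by
  rcases hf.dichot S a with h | h <;> omega

theorem insert_le (hf : IsMRF f) (S : Finset I) (a : I) : f (insert a S) ≤ f S + 1 := by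
  rcases hf.dichot S a with h | h <;> omega

theorem le_union (hf : IsMRF f) (S T : Finset I) : f S ≤ f (T ∪ S) := by
  induction T using Finset.induction_on with
  | empty => simp
  | insert a T _ ih =>
    rw [Finset.insert_union]
    exact ih.trans (hf.le_insert _ a)

theorem le_card (hf : IsMRF f) (S : Finset I) : f S ≤ S.card := by
  induction S using Finset.induction_on with
  | empty => simp [hf.empty]
  | insert a S ha ih =>
    rw [Finset.card_insert_of_notMem ha]
    exact (hf.insert_le S a).trans (by omega)

theorem erase_eq_card (hf : IsMRF f) {S : Finset I} (hS : f S = S.card) (a : I) :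
    f (S.erase a) = (S.erase a).card := by
  by_cases ha : a ∈ S
  · have h₁ := hf.insert_le (S.erase a) a
    have h₂ := hf.le_card (S.erase a)
    have h₃ := Finset.card_erase_add_one ha
    rw [Finset.insert_erase ha] at h₁
    omega
  · rwa [Finset.erase_eq_of_notMem ha]

theorem exists_subset_eq_card (hf : IsMRF f) (S : Finset I) :
    ∃ T ⊆ S, f T = f S ∧ f T = T.card := by
  induction S using Finset.induction_on with
  | empty => exact ⟨∅, subset_rfl, rfl, by simp [hf.empty]⟩
  | insert a S ha ih =>
    obtain ⟨T, hTS, hT, hc⟩ := ih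
    have hsub := hf.submod T S hTS a
    rcases hf.dichot S a with h | h
    · exact ⟨T, hTS.trans (Finset.subset_insert _ _), by omega, hc⟩
    · refine ⟨insert a T, Finset.insert_subset_insert _ hTS, ?_, ?_⟩
      · have := hf.insert_le T a
        omega
      · have := hf.insert_le T a
        rw [Finset.card_insert_of_notMem fun h => ha (hTS h)]
        omega

theorem exists_augment (hf : IsMRF f) {S T : Finset I} (h : f S < f T) :
    ∃ a ∈ T, f (insert a S) = f S + 1 := by
  by_contra! hne
  have hflat : ∀ C ⊆ T, f (C ∪ S) = f S := by
    intro C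
    induction C using Finset.induction_on with
    | empty => simp
    | insert a C _ ih =>
      intro hC
      rw [Finset.insert_subset_iff] at hC
      have h₁ := hf.submod S (C ∪ S) Finset.subset_union_right a
      have h₂ := (hf.dichot S a).resolve_right (hne a hC.1)
      have h₃ := hf.le_insert (C ∪ S) a
      have h₄ := ih hC.2
      rw [Finset.insert_union]
      omega
  have h₁ := hf.le_union T S
  rw [Finset.union_comm, hflat T subset_rfl] at h₁
  omega

end IsMRF

section Exchange

variable {n : ℕ} {I : Type*} [DecidableEq I]

/-- The allocation obtained from `A` by handing item `a` to agent `i`. -/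
def giveItem (A : Fin n → Finset I) (i : Fin n) (a : I) : Fin n → Finset I :=
  fun k => if k = i then insert a (A i) else (A k).erase a

theorem IsAllocation.giveItem {A : Fin n → Finset I} (hA : IsAllocation A) (i : Fin n) (a : I) :
    IsAllocation (giveItem A i a) := by
  intro k l hkl
  have h := Finset.disjoint_left.1 (hA k l hkl)
  rw [Finset.disjoint_left]
  intro b
  unfold _root_.giveItem
  split_ifs <;> simp only [Finset.mem_insert, Finset.mem_erase] <;> grind

theorem sum_card_sdiff_giveItem_lt {A B : Fin n → Finset I} (hB : IsAllocation B) {i : Fin n}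
    {a : I} (haB : a ∈ B i) (haA : a ∉ A i) :
    ∑ k, (B k \ giveItem A i a k).card < ∑ k, (B k \ A k).card := by
  refine Finset.sum_lt_sum (fun k _ => Finset.card_le_card ?_)
    ⟨i, Finset.mem_univ i, Finset.card_lt_card ?_⟩
  · intro b
    have h : k ≠ i → a ∉ B k := fun hk hak =>
      Finset.disjoint_left.1 (hB k i hk) hak haB
    unfold giveItem
    split_ifs <;> simp only [Finset.mem_sdiff, Finset.mem_insert, Finset.mem_erase] <;> grind
  · refine Finset.ssubset_iff_subset_ne.2 ⟨?_, fun h => ?_⟩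
    · intro b
      simp only [giveItem, if_true, Finset.mem_sdiff, Finset.mem_insert]
      tauto
    · have : a ∈ B i \ giveItem A i a i := by
        rw [h]; simp [haA, haB]
      simp [giveItem] at this

/-- Exchange property of the utility vectors of non-redundant allocations. -/
theorem exists_exchange {f : Fin n → Finset I → ℕ} (hf : ∀ i, IsMRF (f i))
    {A B : Fin n → Finset I} (hA : IsAllocation A) (hAc : ∀ k, f k (A k) = (A k).card)
    (hB : IsAllocation B) (hBc : ∀ k, f k (B k) = (B k).card) {i : Fin n}
    (hi : (A i).card < (B i).card) :
    ∃ C : Fin n → Finset I, IsAllocation C ∧ (∀ k, f k (C k) = (C k).card) ∧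
      ((∀ k, (C k).card = (A k).card + (Pi.single i 1 : Fin n → ℕ) k) ∨
        ∃ j, (B j).card < (A j).card ∧
          ∀ k, (C k).card + (Pi.single j 1 : Fin n → ℕ) k =
            (A k).card + (Pi.single i 1 : Fin n → ℕ) k) := by
  induction hd : ∑ k, (B k \ A k).card using Nat.strong_induction_on generalizing A i with
  | _ d ih =>
  obtain ⟨a, haB, ha⟩ := (hf i).exists_augment (S := A i) (T := B i) (by rw [hAc, hBc]; exact hi)
  have haA : a ∉ A i := fun h => by
    rw [Finset.insert_eq_of_mem h] at ha
    omega
  have hlt := sum_card_sdiff_giveItem_lt hB haB haA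
  have hC := hA.giveItem i a
  have hCc : ∀ k, f k (giveItem A i a k) = (giveItem A i a k).card := by
    intro k
    by_cases hk : k = i
    · subst hk
      simp only [giveItem, if_true]
      rw [ha, hAc, Finset.card_insert_of_notMem haA]
    · simp only [giveItem, if_neg hk]
      exact (hf k).erase_eq_card (hAc k) a
  by_cases hfree : ∃ j, a ∈ A j
  · obtain ⟨j, haj⟩ := hfree
    have hji : j ≠ i := fun h => haA (h ▸ haj)
    have hcard : ∀ k, (giveItem A i a k).card + (Pi.single j 1 : Fin n → ℕ) k =
        (A k).card + (Pi.single i 1 : Fin n → ℕ) k := by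
      intro k
      by_cases hk : k = i
      · subst hk
        simp [giveItem, Finset.card_insert_of_notMem haA, hji.symm]
      by_cases hkj : k = j
      · subst hkj
        simp [giveItem, hk, Finset.card_erase_add_one haj]
      · have : a ∉ A k := fun h => Finset.disjoint_left.1 (hA k j hkj) h haj
        simp [giveItem, hk, hkj, Finset.erase_eq_of_notMem this]
    by_cases hj : (B j).card < (A j).card
    · exact ⟨_, hC, hCc, Or.inr ⟨j, hj, hcard⟩⟩
    · have hj' : (giveItem A i a j).card < (B j).card := by
        have := hcard j
        simp only [Pi.single_eq_same, Pi.single_eq_of_ne hji] at this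
        omega
      obtain ⟨D, hD, hDc, h⟩ := ih _ (hd ▸ hlt) hC hCc hj' rfl
      refine ⟨D, hD, hDc, ?_⟩
      rcases h with h | ⟨l, hl, h⟩
      · exact Or.inl fun k => (h k).trans (hcard k)
      · refine Or.inr ⟨l, ?_, fun k => (h k).trans (hcard k)⟩
        have := hcard l
        by_cases hli : l = i
        · subst hli
          simp only [Pi.single_eq_same] at this
          omega
        · simp only [Pi.single_eq_of_ne hli] at this
          omega
  · push Not at hfree
    refine ⟨_, hC, hCc, Or.inl fun k => ?_⟩
    by_cases hk : k = i
    · subst hk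
      simp [giveItem, Finset.card_insert_of_notMem haA]
    · simp [giveItem, hk, Finset.erase_eq_of_notMem (hfree k)]

/-- `u` is the utility vector of some allocation. -/
def Attainable (f : Fin n → Finset I → ℕ) (u : Fin n → ℕ) : Prop :=
  ∃ A : Fin n → Finset I, IsAllocation A ∧ util f A = u

theorem Attainable.exists_nonredundant {f : Fin n → Finset I → ℕ} (hf : ∀ i, IsMRF (f i))
    {u : Fin n → ℕ} (hu : Attainable f u) : ∃ A : Fin n → Finset I, IsAllocation A ∧
      (∀ k, f k (A k) = (A k).card) ∧ ∀ k, u k = (A k).card := by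
  obtain ⟨A, hA, rfl⟩ := hu
  choose B hBA hB hBc using fun k => (hf k).exists_subset_eq_card (A k)
  exact ⟨B, fun i j hij => (hA i j hij).mono (hBA i) (hBA j), hBc,
    fun k => (hB k).symm.trans (hBc k)⟩

theorem Attainable.exists_exchange {f : Fin n → Finset I → ℕ} (hf : ∀ i, IsMRF (f i))
    {u v : Fin n → ℕ} (hu : Attainable f u) (hv : Attainable f v) {i : Fin n}
    (hi : u i < v i) :
    Attainable f (u + Pi.single i 1) ∨ ∃ j, v j < u j ∧ ∃ w, Attainable f w ∧
      w + Pi.single j 1 = u + Pi.single i 1 := by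
  obtain ⟨A, hA, hAc, hAu⟩ := hu.exists_nonredundant hf
  obtain ⟨B, hB, hBc, hBv⟩ := hv.exists_nonredundant hf
  rw [hAu, hBv] at hi
  obtain ⟨C, hC, hCc, h⟩ := _root_.exists_exchange hf hA hAc hB hBc hi
  rcases h with h | ⟨j, hj, h⟩
  · refine Or.inl ⟨C, hC, funext fun k => ?_⟩
    rw [util, hCc, h, Pi.add_apply, hAu]
  · refine Or.inr ⟨j, by rwa [hAu, hBv], util f C, ⟨C, hC, rfl⟩, funext fun k => ?_⟩
    rw [Pi.add_apply, util, hCc, h, Pi.add_apply, hAu]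

end Exchange

section Perturbed

variable {n : ℕ}

/-- The utility vector `u` shifted by the real vector `p`. -/
def shifted (p : Fin n → ℝ) (u : Fin n → ℕ) : Fin n → ℝ :=
  fun i => (u i : ℝ) + p i

theorem lorenzGE_shifted_add_single (p : Fin n → ℝ) (u : Fin n → ℕ) (i : Fin n) :
    LorenzGE (shifted p (u + Pi.single i 1)) (shifted p u) := by
  refine LorenzGE.of_forall_exists fun S => ⟨S, rfl, Finset.sum_le_sum fun k _ => ?_⟩
  simp [shifted]

theorem shifted_transfer {p : Fin n → ℝ} {u w : Fin n → ℕ} {i j : Fin n}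
    (hw : w + Pi.single j 1 = u + Pi.single i 1) (k : Fin n) :
    shifted p w k = shifted p u k + (if k = i then 1 else 0) - (if k = j then 1 else 0) := by
  have h := congrFun hw k
  simp only [Pi.add_apply, Pi.single_apply] at h
  have h' : ((w k : ℝ) + if k = j then 1 else 0) = u k + if k = i then 1 else 0 := by
    exact_mod_cast h
  simp only [shifted]
  linarith

theorem lorenzGE_shifted_transfer {p : Fin n → ℝ} {u w : Fin n → ℕ} {i j : Fin n}
    (hw : w + Pi.single j 1 = u + Pi.single i 1)
    (hij : shifted p u i + 1 < shifted p u j) : LorenzGE (shifted p w) (shifted p u) := by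
  refine LorenzGE.of_forall_exists fun S => ?_
  have hsum : ∑ k ∈ S, shifted p w k = ∑ k ∈ S, shifted p u k +
      (if i ∈ S then 1 else 0) - (if j ∈ S then 1 else 0) := by
    simp only [shifted_transfer hw, Finset.sum_sub_distrib, Finset.sum_add_distrib,
      Finset.sum_ite_eq']
  rw [hsum]
  by_cases h : j ∈ S ∧ i ∉ S
  · refine ⟨insert i (S.erase j), ?_, ?_⟩
    · rw [Finset.card_insert_of_notMem (by simp [h.2]), Finset.card_erase_add_one h.1]
    · rw [Finset.sum_insert (by simp [h.2]), if_neg h.2, if_pos h.1]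
      have := Finset.add_sum_erase S (shifted p u) h.1
      linarith
  · refine ⟨S, rfl, ?_⟩
    split_ifs <;> first | linarith | tauto

/-- A strictly convex potential, strictly decreased by increments and by equalizing transfers. -/
noncomputable def inequality (x : Fin n → ℝ) : ℝ := ∑ k, Real.exp (-x k)

theorem inequality_shifted_add_single_lt (p : Fin n → ℝ) (u : Fin n → ℕ) (i : Fin n) :
    inequality (shifted p (u + Pi.single i 1)) < inequality (shifted p u) := by
  refine Finset.sum_lt_sum (fun k _ => ?_) ⟨i, Finset.mem_univ i, ?_⟩
  · exact Real.exp_le_exp.2 (neg_le_neg (by simp [shifted]))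
  · exact Real.exp_lt_exp.2 (neg_lt_neg (by simp [shifted]))

theorem inequality_shifted_transfer_lt {p : Fin n → ℝ} {u w : Fin n → ℕ} {i j : Fin n}
    (hw : w + Pi.single j 1 = u + Pi.single i 1)
    (hij : shifted p u i + 1 < shifted p u j) :
    inequality (shifted p w) < inequality (shifted p u) := by
  have hne : i ≠ j := fun h => by subst h; linarith
  have hsplit : ∀ x : Fin n → ℝ, inequality x = Real.exp (-x i) + (Real.exp (-x j) +
      ∑ k ∈ (Finset.univ.erase i).erase j, Real.exp (-x k)) := by
    intro x
    rw [Finset.add_sum_erase (Finset.univ.erase i) (fun k => Real.exp (-x k)) (by simp [hne.symm]),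
      Finset.add_sum_erase Finset.univ (fun k => Real.exp (-x k)) (by simp)]
    rfl
  have hrest : ∑ k ∈ (Finset.univ.erase i).erase j, Real.exp (-shifted p w k) =
      ∑ k ∈ (Finset.univ.erase i).erase j, Real.exp (-shifted p u k) := by
    refine Finset.sum_congr rfl fun k hk => ?_
    simp only [Finset.mem_erase] at hk
    rw [shifted_transfer hw, if_neg hk.2.1, if_neg hk.1]
    simp
  rw [hsplit, hsplit, hrest, shifted_transfer hw i, shifted_transfer hw j, if_pos rfl,
    if_neg hne, if_neg hne.symm, if_pos rfl]
  have h₁ : Real.exp (-shifted p u i) = Real.exp (-(shifted p u i + 1 - 0)) * Real.exp 1 := by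
    rw [← Real.exp_add]; congr 1; ring
  have h₂ : Real.exp (-(shifted p u j + 0 - 1)) = Real.exp (-shifted p u j) * Real.exp 1 := by
    rw [← Real.exp_add]; congr 1; ring
  have h₃ : Real.exp (-shifted p u j) < Real.exp (-(shifted p u i + 1 - 0)) :=
    Real.exp_lt_exp.2 (by linarith)
  have h₄ : 1 < Real.exp 1 := Real.one_lt_exp_iff.2 one_pos
  rw [h₁, h₂]
  nlinarith [mul_pos (sub_pos.2 h₃) (sub_pos.2 h₄)]

variable {I : Type*}

/-- No attainable vector arises from `u` by an increment or by an equalizing transfer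
(with respect to the shifts `p`). -/
structure LocallyFair (f : Fin n → Finset I → ℕ) (p : Fin n → ℝ) (u : Fin n → ℕ) : Prop where
  attainable : Attainable f u
  not_add_single : ∀ i, ¬ Attainable f (u + Pi.single i 1)
  not_transfer : ∀ i j w, shifted p u i + 1 < shifted p u j →
    w + Pi.single j 1 = u + Pi.single i 1 → ¬ Attainable f w

theorem Attainable.exists_locallyFair [Fintype I] {f : Fin n → Finset I → ℕ} (p : Fin n → ℝ)
    {u : Fin n → ℕ} (hu : Attainable f u) :
    ∃ v, LocallyFair f p v ∧ LorenzGE (shifted p v) (shifted p u) := by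
  have hfin : {v | Attainable f v ∧ LorenzGE (shifted p v) (shifted p u)}.Finite := by
    refine (Set.finite_range (fun A : Fin n → Finset I => util f A)).subset ?_
    rintro v ⟨⟨A, -, hA⟩, -⟩
    exact ⟨A, hA⟩
  obtain ⟨v, ⟨hv, hvu⟩, hmin⟩ := hfin.exists_minimalFor (fun v => inequality (shifted p v)) _
    ⟨u, hu, LorenzGE.rfl⟩
  have hnot : ∀ w, Attainable f w → LorenzGE (shifted p w) (shifted p v) →
      ¬ inequality (shifted p w) < inequality (shifted p v) := fun w hw hwv hlt =>
    absurd (hmin ⟨hw, hwv.trans hvu⟩ hlt.le) (not_le.2 hlt)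
  exact ⟨v, ⟨hv,
    fun i h => hnot _ h (lorenzGE_shifted_add_single p v i)
      (inequality_shifted_add_single_lt p v i),
    fun i j w hij hw h => hnot w h (lorenzGE_shifted_transfer hw hij)
      (inequality_shifted_transfer_lt hw hij)⟩, hvu⟩

/-- Fractional genericity of the shifts: shifted integers of distinct agents never coincide. -/
def GenericShift (p : Fin n → ℝ) : Prop :=
  ∀ i j : Fin n, ∀ a b : ℕ, (a : ℝ) + p i = b + p j → i = j

theorem LocallyFair.not_lt_of_minimal [DecidableEq I] {f : Fin n → Finset I → ℕ}
    (hf : ∀ i, IsMRF (f i)) {p : Fin n → ℝ} (hp : GenericShift p) {u v : Fin n → ℕ} (hu : LocallyFair f p u)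
    (hv : LocallyFair f p v) {i : Fin n}
    (hmin : ∀ j, u j ≠ v j → shifted p u i ≤ shifted p v j) : ¬ u i < v i := by
  intro hi
  rcases hu.attainable.exists_exchange hf hv.attainable hi with h | ⟨j, hj, w, hw, h⟩
  · exact hu.not_add_single i h
  · refine hu.not_transfer i j w ?_ h hw
    have hij : i ≠ j := fun h => by subst h; omega
    have hlt : shifted p u i < shifted p v j :=
      lt_of_le_of_ne (hmin j hj.ne') fun h => hij (hp i j _ _ h)
    have hj' : (v j : ℝ) + 1 ≤ u j := by exact_mod_cast hj
    simp only [shifted] at hlt ⊢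
    linarith

theorem LocallyFair.unique [DecidableEq I] {f : Fin n → Finset I → ℕ} (hf : ∀ i, IsMRF (f i))
    {p : Fin n → ℝ} (hp : GenericShift p) {u v : Fin n → ℕ} (hu : LocallyFair f p u)
    (hv : LocallyFair f p v) : u = v := by
  by_contra hne
  obtain ⟨i₀, hi₀⟩ := Function.ne_iff.1 hne
  obtain ⟨i, hi, hmin⟩ := Finset.exists_min_image (Finset.univ.filter fun i => u i ≠ v i)
    (fun i => min (shifted p u i) (shifted p v i)) ⟨i₀, by simpa using hi₀⟩
  have hi' : u i ≠ v i := by simpa using hi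
  have hmin' : ∀ j, u j ≠ v j →
      min (shifted p u i) (shifted p v i) ≤ min (shifted p u j) (shifted p v j) :=
    fun j hj => hmin j (by simpa using hj)
  rcases hi'.lt_or_gt with h | h
  · have hle : shifted p u i ≤ shifted p v i := by simp [shifted, h.le]
    rw [min_eq_left hle] at hmin'
    exact hu.not_lt_of_minimal hf hp hv (fun j hj => (hmin' j hj).trans (min_le_right _ _)) h
  · have hle : shifted p v i ≤ shifted p u i := by simp [shifted, h.le]
    rw [min_eq_right hle] at hmin'
    exact hv.not_lt_of_minimal hf hp hu
      (fun j hj => (hmin' j hj.symm).trans (min_le_left _ _)) h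

theorem exists_attainable_lorenzGE [DecidableEq I] [Fintype I] {f : Fin n → Finset I → ℕ}
    (hf : ∀ i, IsMRF (f i)) {p : Fin n → ℝ} (hp : GenericShift p) :
    ∃ v, Attainable f v ∧ ∀ u, Attainable f u → LorenzGE (shifted p v) (shifted p u) := by
  have hempty : Attainable f (util f fun _ => ∅) :=
    ⟨_, fun _ _ _ => Finset.disjoint_empty_left _, rfl⟩
  obtain ⟨v, hv, -⟩ := hempty.exists_locallyFair p
  refine ⟨v, hv.attainable, fun u hu => ?_⟩
  obtain ⟨w, hw, hwu⟩ := hu.exists_locallyFair p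
  rwa [hv.unique hf hp hw]

end Perturbed

section Priority

variable {n : ℕ}

/-- The perturbation given by the priority order `σ`. -/
noncomputable def priorityShift (σ : Equiv.Perm (Fin n)) (i : Fin n) : ℝ :=
  (((σ i : ℕ) : ℝ) + 1) / (n : ℝ) ^ 2

theorem priorityShift_pos (σ : Equiv.Perm (Fin n)) (i : Fin n) : 0 < priorityShift σ i := by
  have : 0 < (n : ℝ) := by exact_mod_cast i.pos
  unfold priorityShift
  positivity

theorem priorityShift_le (σ : Equiv.Perm (Fin n)) (i : Fin n) :
    priorityShift σ i ≤ 1 / (n : ℝ) := by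
  have hn : 0 < (n : ℝ) := by exact_mod_cast i.pos
  have h : ((σ i : ℕ) : ℝ) + 1 ≤ n := by exact_mod_cast (σ i).isLt
  unfold priorityShift
  rw [div_le_div_iff₀ (by positivity) hn]
  nlinarith

theorem priorityShift_le_one (σ : Equiv.Perm (Fin n)) (i : Fin n) : priorityShift σ i ≤ 1 := by
  have hn : 1 ≤ (n : ℝ) := by exact_mod_cast i.pos
  exact (priorityShift_le σ i).trans (div_le_one_of_le₀ hn (by linarith))

theorem sum_priorityShift_le_one (σ : Equiv.Perm (Fin n)) (S : Finset (Fin n)) :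
    ∑ i ∈ S, priorityShift σ i ≤ 1 := by
  have hS : (S.card : ℝ) ≤ n := by exact_mod_cast card_finset_fin_le S
  calc ∑ i ∈ S, priorityShift σ i ≤ ∑ _i ∈ S, 1 / (n : ℝ) :=
        Finset.sum_le_sum fun i _ => priorityShift_le σ i
    _ = S.card / n := by simp [div_eq_mul_inv]
    _ ≤ 1 := div_le_one_of_le₀ hS (Nat.cast_nonneg n)

theorem genericShift_priorityShift (σ : Equiv.Perm (Fin n)) :
    GenericShift (priorityShift σ) := by
  intro i j a b h
  have hi := priorityShift_pos σ i
  have hj := priorityShift_pos σ j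
  have hi' := priorityShift_le_one σ i
  have hj' := priorityShift_le_one σ j
  have hab : a = b := by
    have h₁ : (a : ℝ) < b + 1 := by linarith
    have h₂ : (b : ℝ) < a + 1 := by linarith
    norm_cast at h₁ h₂
    omega
  have hn : (n : ℝ) ^ 2 ≠ 0 := by
    have : 0 < (n : ℝ) := by exact_mod_cast i.pos
    positivity
  rw [hab, add_right_inj, priorityShift, priorityShift, div_left_inj' hn, add_left_inj,
    Nat.cast_inj] at h
  exact σ.injective (Fin.ext h)

theorem LorenzGE.of_shifted {σ : Equiv.Perm (Fin n)} {u v : Fin n → ℕ}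
    (h : LorenzGE (shifted (priorityShift σ) u) (shifted (priorityShift σ) v)) :
    LorenzGE u v := by
  intro k
  obtain ⟨S, hS, hSu⟩ := exists_sum_eq_sum_take_sortedVec u k
  obtain ⟨T, hT, hTv⟩ := exists_sum_eq_sum_take_sortedVec (shifted (priorityShift σ) v) k
  have h₁ := sum_take_sortedVec_le (shifted (priorityShift σ) u) hS
  have h₂ := sum_take_sortedVec_le v hT
  have h₃ := h k
  rw [hSu]
  rcases T.eq_empty_or_nonempty with rfl | hTne
  · simp only [Finset.sum_empty] at h₂
    exact h₂.trans (Nat.zero_le _)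
  rw [hTv] at h₃
  have h₄ := h₃.trans h₁
  simp only [shifted, Finset.sum_add_distrib] at h₄
  have h₅ := sum_priorityShift_le_one σ S
  have h₆ := Finset.sum_pos (fun i _ => priorityShift_pos σ i) hTne
  have h₇ : ((∑ i ∈ T, v i : ℕ) : ℝ) < (∑ i ∈ S, u i : ℕ) + 1 := by
    push_cast
    linarith
  norm_cast at h₇
  omega

theorem LorenzGE.eq_of_antisymm_shifted {p : Fin n → ℝ} (hp : GenericShift p) {u v : Fin n → ℕ}
    (h₁ : LorenzGE (shifted p u) (shifted p v)) (h₂ : LorenzGE (shifted p v) (shifted p u))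
    (i : Fin n) : u i = v i := by
  have hmem : shifted p u i ∈ Finset.univ.val.map (shifted p v) := by
    rw [← h₁.map_eq_of_antisymm h₂]
    exact Multiset.mem_map_of_mem _ (Finset.mem_univ_val i)
  obtain ⟨j, -, hj⟩ := Multiset.mem_map.1 hmem
  obtain rfl := hp _ _ _ _ hj
  simpa [shifted] using hj.symm

end Priority

/-- Existence and uniqueness of σ-Lorenz dominating allocations for MRF valuations,
and the fact that they are Lorenz dominating with respect to the unperturbed valuations. -/
theorem sigma_lorenz_dominating_exists_unique
    {n : ℕ} {I : Type*} [DecidableEq I] [Fintype I]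
    (σ : Equiv.Perm (Fin n))
    (f : Fin n → Finset I → ℕ) (hf : ∀ i, IsMRF (f i)) :
    -- (i) a σ-Lorenz dominating allocation exists
    (∃ A : Fin n → Finset I, IsAllocation A ∧ SigmaLorenzDom σ f A) ∧
    -- (ii) the utility vector of σ-Lorenz dominating allocations is unique
    (∀ A A' : Fin n → Finset I, IsAllocation A → SigmaLorenzDom σ f A →
      IsAllocation A' → SigmaLorenzDom σ f A' →
      ∀ i : Fin n, f i (A i) = f i (A' i)) ∧
    -- (iii) every σ-Lorenz dominating allocation is Lorenz dominating for `f`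
    (∀ A : Fin n → Finset I, IsAllocation A → SigmaLorenzDom σ f A →
      LorenzDominating f A) := by
  refine ⟨?_, fun A A' hA hdA hA' hdA' => ?_, fun A _ hdA B hB => (hdA B hB).of_shifted⟩
  · obtain ⟨_, ⟨A, hA, rfl⟩, hdom⟩ :=
      exists_attainable_lorenzGE hf (genericShift_priorityShift σ)
    exact ⟨A, hA, fun B hB => hdom _ ⟨B, hB, rfl⟩⟩
  · exact LorenzGE.eq_of_antisymm_shifted (genericShift_priorityShift σ)
      (u := util f A) (v := util f A') (hdA A' hA') (hdA' A hA)
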